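/- Let H be a simple graph whose connected components are H_1, H_2, …, H_q. Then φ(K1∇H) = φ(K1∇H_1) + φ(K1∇H_2) + ⋯ + φ(K1∇H_q). -/

import Mathlib

open scoped Classical

namespace PaperEDC

/-- `G` contains `m` pairwise edge-disjoint cycles. -/
def HasEDC {V : Type*} (G : SimpleGraph V) (m : ℕ) : Prop :=
  ∃ c : Fin m → Σ v : V, G.Walk v v,
    (∀ i, (c i).2.IsCycle) ∧
    ∀ i j, i ≠ j → ∀ e ∈ (c i).2.edges, e ∉ (c j).2.edges

/-- `φ(G)`: the maximum number of pairwise edge-disjoint cycles in `G`. -/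
noncomputable def phi {V : Type*} (G : SimpleGraph V) : ℕ := sSup {m | HasEDC G m}

/-- `K₁ ∇ H`: the join of a single new vertex with `H`. -/
def joinK1 {V : Type*} (H : SimpleGraph V) : SimpleGraph (Option V) :=
  SimpleGraph.fromRel fun a b => a = none ∨ ∃ u v, a = some u ∧ b = some v ∧ H.Adj u v

/-- `t(G)`: the number of triangles of `G`. -/
noncomputable def triCount {V : Type*} (G : SimpleGraph V) : ℕ :=
  Nat.card {s : Finset V // G.IsNClique 3 s}

/-- A triangle-cactus: a connected graph in which every edge lies on a cycle and every
cycle is a triangle. -/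
def IsTriangleCactus {V : Type*} (G : SimpleGraph V) : Prop :=
  G.Connected ∧
  (∀ e ∈ G.edgeSet, ∃ (v : V) (w : G.Walk v v), w.IsCycle ∧ e ∈ w.edges) ∧
  ∀ (v : V) (w : G.Walk v v), w.IsCycle → w.length = 3

/-- `e(G)`: the number of edges of `G`. -/
noncomputable def ecard {V : Type*} (G : SimpleGraph V) : ℕ := Nat.card G.edgeSet

/-- `ρ(G)`: the spectral radius (largest adjacency eigenvalue) of `G`. -/
noncomputable def specRad {V : Type*} [Fintype V] (G : SimpleGraph V) : ℝ :=
  sSup {x : ℝ | ∃ f : V → ℝ, f ≠ 0 ∧ ∀ v : V, ∑ u : V, (if G.Adj v u then f u else 0) = x * f v}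

/-!
Every cycle of `K₁ ∇ H` stays in the cone over one component of `H`: deleting the apex from the
cycle leaves walks in `H`, and a cycle passes through the apex at most once. Cones over different
components meet only in the apex, so they share no edge. Hence a family of edge-disjoint cycles of
`K₁ ∇ H` is the same thing as one such family in each cone.
-/

section CyclePacking

open SimpleGraph

variable {ι κ V W : Type*} {G : SimpleGraph V} {G' : SimpleGraph W}

/-- A *cycle packing* in `G`: a family of pairwise edge-disjoint cycles, indexed by an arbitrary
type so that packings can be restricted and glued without renumbering. -/
def IsCyclePacking (c : ι → Σ v : V, G.Walk v v) : Prop :=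
  (∀ i, (c i).2.IsCycle) ∧ Pairwise fun i j => (c i).2.edges.Disjoint (c j).2.edges

theorem mem_of_mem_edges_map_induce {s : Set V} {u v : s} {w : (G.induce s).Walk u v}
    {e : Sym2 V} (he : e ∈ (w.map (Embedding.induce s).toHom).edges) {x : V} (hx : x ∈ e) :
    x ∈ s := by
  rw [Walk.edges_map, List.mem_map] at he
  obtain ⟨e', -, rfl⟩ := he
  obtain ⟨y, -, rfl⟩ := Sym2.mem_map.1 hx
  exact y.2

theorem map_edges_induce {s : Set V} {u v : V} (w : G.Walk u v) (hw : ∀ x ∈ w.support, x ∈ s) :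
    (w.induce s hw).edges.map (Sym2.map Subtype.val) = w.edges :=
  ((w.induce s hw).edges_map (Embedding.induce s).toHom).symm.trans
    (congrArg Walk.edges (w.map_induce hw))

namespace IsCyclePacking

variable {c : ι → Σ v : V, G.Walk v v}

theorem comp_injective (hc : IsCyclePacking c) {g : κ → ι} (hg : Function.Injective g) :
    IsCyclePacking (c ∘ g) :=
  ⟨fun k => hc.1 (g k), fun _ _ hkl => hc.2 (hg.ne hkl)⟩

theorem hasEDC [Finite ι] (hc : IsCyclePacking c) : HasEDC G (Nat.card ι) :=
  ⟨_, hc.comp_injective (Finite.equivFin ι).symm.injective⟩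

theorem map (hc : IsCyclePacking c) (f : G →g G') (hf : Function.Injective f) :
    IsCyclePacking fun i => (⟨f (c i).1, (c i).2.map f⟩ : Σ v : W, G'.Walk v v) := by
  refine ⟨fun i => (hc.1 i).map hf, fun i j hij => ?_⟩
  simpa only [Walk.edges_map] using List.disjoint_map (Sym2.map.injective hf) (hc.2 hij)

theorem induce (hc : IsCyclePacking c) {s : Set V} (hs : ∀ i, ∀ x ∈ (c i).2.support, x ∈ s) :
    IsCyclePacking fun i =>
      (⟨_, (c i).2.induce s (hs i)⟩ : Σ v : s, (G.induce s).Walk v v) := by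
  refine ⟨fun i => .of_map (f := (Embedding.induce s).toHom) ?_, fun i j hij => ?_⟩
  · rw [Walk.map_induce]
    exact hc.1 i
  · have hdisj : (c i).2.edges.Disjoint (c j).2.edges := hc.2 hij
    rw [← map_edges_induce _ (hs i), ← map_edges_induce _ (hs j)] at hdisj
    exact hdisj.of_map

theorem sigma {κ : ι → Type*} {S : ι → Set V} (hS : Pairwise fun i j => (S i ∩ S j).Subsingleton)
    {c : ∀ i, κ i → Σ v : S i, (G.induce (S i)).Walk v v} (hc : ∀ i, IsCyclePacking (c i)) :
    IsCyclePacking fun p : Σ i, κ i =>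
      (⟨_, (c p.1 p.2).2.map (Embedding.induce (S p.1)).toHom⟩ : Σ v : V, G.Walk v v) := by
  have hmap i := (hc i).map (Embedding.induce (S i)).toHom Subtype.val_injective
  refine ⟨fun p => (hmap p.1).1 p.2, ?_⟩
  rintro ⟨i, k⟩ ⟨j, l⟩ hne e hek hel
  by_cases hij : i = j
  · subst hij
    exact (hmap i).2 (fun hkl => hne (congrArg (Sigma.mk i) hkl)) hek hel
  · induction e with | _ a b =>
    have hmem x (hx : x ∈ s(a, b)) : x ∈ S i ∩ S j :=
      ⟨mem_of_mem_edges_map_induce hek hx, mem_of_mem_edges_map_induce hel hx⟩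
    have hab : a = b := hS hij (hmem a (Sym2.mem_mk_left a b)) (hmem b (Sym2.mem_mk_right a b))
    exact (Walk.adj_of_mem_edges _ hek).ne hab

end IsCyclePacking

theorem HasEDC.of_injective_hom {m : ℕ} (h : HasEDC G m) (f : G →g G')
    (hf : Function.Injective f) : HasEDC G' m := by
  obtain ⟨c, hc⟩ := h
  exact ⟨_, IsCyclePacking.map hc f hf⟩

theorem hasEDC_zero (G : SimpleGraph V) : HasEDC G 0 :=
  ⟨finZeroElim, finZeroElim, finZeroElim⟩

theorem bddAbove_hasEDC (G : SimpleGraph V) [Finite G.edgeSet] : BddAbove {m | HasEDC G m} := by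
  refine ⟨Nat.card G.edgeSet, ?_⟩
  rintro m ⟨c, hcycle, hdisj⟩
  choose e he using fun i =>
    List.exists_mem_of_ne_nil _ (Walk.edges_eq_nil.not.2 (hcycle i).not_nil)
  have he_inj : Function.Injective fun i =>
      (⟨e i, (c i).2.edges_subset_edgeSet (he i)⟩ : G.edgeSet) := by
    intro i j hij
    by_contra hne
    have heq : e i = e j := congrArg Subtype.val hij
    exact hdisj i j hne _ (he i) (heq ▸ he j)
  simpa using Nat.card_le_card_of_injective _ he_inj

theorem hasEDC_phi (hG : BddAbove {m | HasEDC G m}) : HasEDC G (phi G) :=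
  Nat.sSup_mem ⟨0, hasEDC_zero G⟩ hG

theorem HasEDC.le_phi {m : ℕ} (h : HasEDC G m) (hG : BddAbove {m | HasEDC G m}) : m ≤ phi G :=
  le_csSup hG h

theorem phi_congr (f : G ≃g G') : phi G = phi G' := by
  unfold phi
  congr 1
  ext m
  exact ⟨fun h => h.of_injective_hom f.toHom f.injective,
    fun h => h.of_injective_hom f.symm.toHom f.symm.injective⟩

theorem bddAbove_hasEDC_induce (hG : BddAbove {m | HasEDC G m}) (s : Set V) :
    BddAbove {m | HasEDC (G.induce s) m} :=
  hG.mono fun _ h => h.of_injective_hom (Embedding.induce s).toHom Subtype.val_injective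

end CyclePacking

section Decomposition

variable {ι V : Type*} {G : SimpleGraph V} {S : ι → Set V}

theorem sum_phi_induce_le_phi (hG : BddAbove {m | HasEDC G m})
    (hS : Pairwise fun i j => (S i ∩ S j).Subsingleton) (t : Finset ι) :
    ∑ i ∈ t, phi (G.induce (S i)) ≤ phi G := by
  choose c hc using fun i : t => hasEDC_phi (bddAbove_hasEDC_induce hG (S i))
  have hglued := IsCyclePacking.sigma (hS.comp_of_injective Subtype.val_injective) hc
  calc ∑ i ∈ t, phi (G.induce (S i)) = Nat.card (Σ i : t, Fin (phi (G.induce (S i)))) := by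
        simp only [Nat.card_sigma, Nat.card_fin,
          Finset.sum_coe_sort t fun i => phi (G.induce (S i))]
    _ ≤ phi G := hglued.hasEDC.le_phi hG

theorem phi_le_sum_phi_induce (hG : BddAbove {m | HasEDC G m})
    (hcycle : ∀ ⦃v⦄ (w : G.Walk v v), w.IsCycle → ∃ i, ∀ x ∈ w.support, x ∈ S i) :
    ∃ t : Finset ι, phi G ≤ ∑ i ∈ t, phi (G.induce (S i)) := by
  obtain ⟨c, hc⟩ := hasEDC_phi hG
  choose part hpart using fun k => hcycle (c k).2 (hc.1 k)
  have hfiber i : Nat.card {k // part k = i} ≤ phi (G.induce (S i)) :=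
    ((IsCyclePacking.comp_injective hc Subtype.val_injective).induce
      fun ⟨k, hk⟩ => hk ▸ hpart k).hasEDC.le_phi (bddAbove_hasEDC_induce hG (S i))
  refine ⟨Finset.univ.image part, ?_⟩
  calc phi G = ∑ i ∈ Finset.univ.image part, Nat.card {k // part k = i} := by
        simpa [Nat.card_eq_fintype_card, Fintype.card_subtype]
          using Finset.card_eq_sum_card_image part Finset.univ
    _ ≤ _ := Finset.sum_le_sum fun i _ => hfiber i

theorem finite_support_phi_induce (hG : BddAbove {m | HasEDC G m})
    (hS : Pairwise fun i j => (S i ∩ S j).Subsingleton) :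
    (Function.support fun i => phi (G.induce (S i))).Finite := by
  by_contra hinf
  obtain ⟨t, ht, hcard⟩ := Set.Infinite.exists_subset_card_eq hinf (phi G + 1)
  have hcard_le : t.card ≤ ∑ i ∈ t, phi (G.induce (S i)) := by
    simpa using Finset.card_nsmul_le_sum t _ 1 fun i hi => Nat.one_le_iff_ne_zero.2 (ht hi)
  have hsum_le := sum_phi_induce_le_phi hG hS t
  omega

theorem phi_eq_finsum_phi_induce (hG : BddAbove {m | HasEDC G m})
    (hS : Pairwise fun i j => (S i ∩ S j).Subsingleton)
    (hcycle : ∀ ⦃v⦄ (w : G.Walk v v), w.IsCycle → ∃ i, ∀ x ∈ w.support, x ∈ S i) :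
    phi G = ∑ᶠ i, phi (G.induce (S i)) := by
  have hfinite := finite_support_phi_induce hG hS
  obtain ⟨t, ht⟩ := phi_le_sum_phi_induce hG hcycle
  refine le_antisymm (ht.trans ?_) ?_
  · rw [finsum_eq_finsetSum_of_support_subset (s := hfinite.toFinset ∪ t) _ (by simp)]
    exact Finset.sum_le_sum_of_subset Finset.subset_union_right
  · rw [finsum_eq_sum _ hfinite]
    exact sum_phi_induce_le_phi hG hS _

end Decomposition

section Cone

open SimpleGraph

variable {V W : Type*} {H : SimpleGraph V} {K : SimpleGraph W}

@[simp]
theorem joinK1_adj_some_some {u v : V} : (joinK1 H).Adj (some u) (some v) ↔ H.Adj u v := by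
  simpa [joinK1, H.adj_comm v u] using fun h : H.Adj u v => h.ne

@[simp]
theorem joinK1_adj_none_some {v : V} : (joinK1 H).Adj none (some v) := by
  simp [joinK1]

@[simp]
theorem joinK1_adj_some_none {v : V} : (joinK1 H).Adj (some v) none :=
  joinK1_adj_none_some.symm

/-- The embedding of cones induced by an embedding of graphs, fixing the apex. -/
def joinK1Embedding (f : H ↪g K) : joinK1 H ↪g joinK1 K where
  toEmbedding := f.toEmbedding.optionMap
  map_rel_iff' := by
    rintro (_ | u) (_ | v) <;> simp

/-- The vertices of the cone over the component `C`, inside `K₁ ∇ H`. -/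
def coneSupp (C : H.ConnectedComponent) : Set (Option V) :=
  Set.range (joinK1Embedding (Embedding.induce (G := H) C.supp))

theorem some_mem_coneSupp {C : H.ConnectedComponent} {v : V} :
    some v ∈ coneSupp C ↔ v ∈ C.supp := by
  constructor
  · rintro ⟨_ | u, hu⟩
    · exact nomatch hu
    · exact Option.some.inj hu ▸ u.2
  · exact fun hv => ⟨some ⟨v, hv⟩, rfl⟩

theorem none_mem_coneSupp (C : H.ConnectedComponent) : none ∈ coneSupp C :=
  ⟨none, rfl⟩

theorem pairwise_subsingleton_coneSupp_inter :
    Pairwise fun C D : H.ConnectedComponent => (coneSupp C ∩ coneSupp D).Subsingleton := by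
  intro C D hCD
  refine Set.subsingleton_of_subset_singleton (a := none) ?_
  rintro (_ | v) ⟨hC, hD⟩
  · rfl
  · exact absurd ((some_mem_coneSupp.1 hC).symm.trans (some_mem_coneSupp.1 hD)) hCD

theorem mem_coneSupp_of_none_notMem_support {u : V} {x : Option V} :
    ∀ p : (joinK1 H).Walk (some u) x, none ∉ p.support →
      x ∈ coneSupp (H.connectedComponentMk u)
  | .nil, _ => some_mem_coneSupp.2 rfl
  | .cons (v := none) h p, hp => absurd (by simp) hp
  | .cons (v := some v) h p, hp => by
    have huv : H.connectedComponentMk u = H.connectedComponentMk v :=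
      ConnectedComponent.sound (joinK1_adj_some_some.1 h).reachable
    rw [huv]
    exact mem_coneSupp_of_none_notMem_support p fun hnone => hp (by simp [hnone])

theorem mem_coneSupp_of_isPath_to_none {u : V} {p : (joinK1 H).Walk (some u) none}
    (hp : p.IsPath) {x : Option V} (hx : x ∈ p.support) :
    x ∈ coneSupp (H.connectedComponentMk u) := by
  rcases eq_or_ne x none with rfl | hne
  · exact none_mem_coneSupp _
  · exact mem_coneSupp_of_none_notMem_support (p.takeUntil x hx)
      (Walk.endpoint_notMem_support_takeUntil hp hx hne.symm)

theorem exists_support_subset_coneSupp_of_isCycle_none {w : (joinK1 H).Walk none none}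
    (hw : w.IsCycle) : ∃ C : H.ConnectedComponent, ∀ x ∈ w.support, x ∈ coneSupp C := by
  cases w with
  | nil => exact absurd rfl hw.ne_nil
  | @cons _ y _ h p =>
    cases y with
    | none => exact absurd rfl h.ne
    | some u =>
      refine ⟨H.connectedComponentMk u, fun x hx => ?_⟩
      rcases List.mem_cons.1 hx with rfl | hx
      · exact none_mem_coneSupp _
      · exact mem_coneSupp_of_isPath_to_none ((Walk.cons_isCycle_iff _ _).1 hw).1 hx

theorem exists_support_subset_coneSupp_of_isCycle {v : Option V} {w : (joinK1 H).Walk v v}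
    (hw : w.IsCycle) : ∃ C : H.ConnectedComponent, ∀ x ∈ w.support, x ∈ coneSupp C := by
  by_cases hnone : none ∈ w.support
  · obtain ⟨C, hC⟩ := exists_support_subset_coneSupp_of_isCycle_none (hw.rotate hnone)
    exact ⟨C, fun x hx => hC x ((w.mem_support_rotate_iff none hnone).2 hx)⟩
  · cases v with
    | none => exact absurd w.start_mem_support hnone
    | some u =>
      exact ⟨H.connectedComponentMk u, fun x hx =>
        mem_coneSupp_of_none_notMem_support (w.takeUntil x hx) fun h =>
          hnone (w.support_takeUntil_subset_support hx h)⟩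

end Cone

theorem phi_joinK1_eq_sum_components_general {V : Type*} (H : SimpleGraph V)
    (hH : BddAbove {m | HasEDC (joinK1 H) m}) :
    phi (joinK1 H) = ∑ᶠ c : H.ConnectedComponent, phi (joinK1 (H.induce c.supp)) := by
  rw [phi_eq_finsum_phi_induce hH pairwise_subsingleton_coneSupp_inter
    fun _ _ => exists_support_subset_coneSupp_of_isCycle]
  exact finsum_congr fun c => (phi_congr (joinK1Embedding (.induce c.supp)).isoInduceRange).symm

/-- If `H` has connected components `H₁, …, H_q`, then
`φ(K₁ ∇ H) = φ(K₁ ∇ H₁) + ⋯ + φ(K₁ ∇ H_q)`. -/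
theorem phi_joinK1_eq_sum_components {V : Type*} [Fintype V] (H : SimpleGraph V) :
    phi (joinK1 H) = ∑ c : H.ConnectedComponent, phi (joinK1 (H.induce c.supp)) := by
  rw [phi_joinK1_eq_sum_components_general H (bddAbove_hasEDC _), finsum_eq_sum_of_fintype]

end PaperEDC
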